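/- For p > 0 and k⊥ ≥ 0, the following are equivalent: (a) D(p,k⊥,ρ) = 0 for every ρ > 0; (b) (p − 1)² + k⊥² = 1. Hence exactly on the circle (p − 1)² + k⊥² = 1 in wavenumber space, ω² = 0 is a root of the dispersion quartic for every value of the density ρ, i.e. there is a zero-frequency mode independent of ρ. -/

import Mathlib

/-- The determinant `D(p,k⊥,ρ) = (p² − k⁴/4)(p² − k⁴/4 + 2ρ)` of the two-component
dispersion quadratic, with `k² = p² + k⊥²`. -/
noncomputable def dispD (p k ρ : ℝ) : ℝ :=
  (p ^ 2 - (p ^ 2 + k ^ 2) ^ 2 / 4) * (p ^ 2 - (p ^ 2 + k ^ 2) ^ 2 / 4 + 2 * ρ)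

/-- Zero-frequency modes of the two-component dispersion relation: for `p > 0` and
`k⊥ ≥ 0`, `D(p,k⊥,ρ) = 0` for every density `ρ > 0` if and only if the wavevector
lies on the circle `(p−1)² + k⊥² = 1`; there `ω² = 0` is a root of the dispersion
quartic independently of `ρ`. -/
theorem zero_frequency_mode_iff_on_circle
    (p k : ℝ) (hp : 0 < p) (hk : 0 ≤ k) :
    (∀ ρ : ℝ, 0 < ρ → dispD p k ρ = 0) ↔ (p - 1) ^ 2 + k ^ 2 = 1 := by
  constructor
  · intro h
    -- Write `a = p² − (p² + k²)²/4`. The densities `1` and `2` give `a (a + 2) = a (a + 4) = 0`,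
    -- hence `a = 0`.
    have h1 := h 1 one_pos
    have h2 := h 2 two_pos
    simp only [dispD] at h1 h2
    have ha : (p - (p ^ 2 + k ^ 2) / 2) * (p + (p ^ 2 + k ^ 2) / 2) = 0 := by
      linear_combination (h2 - h1) / 2
    have hpos : p + (p ^ 2 + k ^ 2) / 2 ≠ 0 := by positivity
    have hz := (mul_eq_zero.mp ha).resolve_right hpos
    linear_combination -2 * hz
  · intro h ρ _
    -- The circle equation reads `p² + k² = 2p`.
    have hK : p ^ 2 + k ^ 2 = 2 * p := by linear_combination h
    rw [dispD, hK]
    ring
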